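/- arXiv:2211.02871 — 2 statements merged into one kernel-verified Lean document; each statement's English description precedes it below -/
import Mathlib

section
/- Let N ≥ 2, let ρ_DS = Σ_{k=0}^N p_k |S_k^N⟩⟨S_k^N| be a diagonal symmetric N-qubit state (p_k ≥ 0, Σ_k p_k = 1), and let α be a real number such that both Hankel matrices M_0(q) and M_1(q) are positive semidefinite, where q_k = 1 + α·p_k for 0 ≤ k ≤ N. Then σ = 𝟙_S + α·ρ_DS is fully separable. -/
open scoped ComplexOrder

noncomputable section

/-- Separability of an `N`-qubit matrix across the bipartition `X : Xᶜ`. -/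
def SepAcross {N : ℕ} (X : Finset (Fin N))
    (σ : Matrix (Fin N → Fin 2) (Fin N → Fin 2) ℂ) : Prop :=
  ∃ (K : ℕ)
    (A : Fin K → Matrix ({i // i ∈ X} → Fin 2) ({i // i ∈ X} → Fin 2) ℂ)
    (B : Fin K → Matrix ({i // i ∈ Xᶜ} → Fin 2) ({i // i ∈ Xᶜ} → Fin 2) ℂ),
    (∀ k, (A k).PosSemidef) ∧ (∀ k, (B k).PosSemidef) ∧
    ∀ x y, σ x y =
      ∑ k, A k (fun i => x i.1) (fun i => y i.1) * B k (fun i => x i.1) (fun i => y i.1)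

/-- Partial transpose with respect to the qubits in `X`. -/
def pt {N : ℕ} (X : Finset (Fin N))
    (σ : Matrix (Fin N → Fin 2) (Fin N → Fin 2) ℂ) :
    Matrix (Fin N → Fin 2) (Fin N → Fin 2) ℂ :=
  fun x y => σ (fun i => if i ∈ X then y i else x i) (fun i => if i ∈ X then x i else y i)

/-- The Dicke state `|S_k^N⟩`. -/
def dicke (N k : ℕ) : (Fin N → Fin 2) → ℂ :=
  fun x => if (Finset.univ.filter (fun i => x i = 1)).card = k
    then ((Real.sqrt (N.choose k))⁻¹ : ℝ) else 0

/-- The projector onto the symmetric subspace of `N` qubits. -/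
def symProj (N : ℕ) : Matrix (Fin N → Fin 2) (Fin N → Fin 2) ℂ :=
  fun x y => ∑ k ∈ Finset.range (N + 1), dicke N k x * star (dicke N k y)

/-- Full separability of an `N`-qubit matrix. -/
def FullySep {N : ℕ} (σ : Matrix (Fin N → Fin 2) (Fin N → Fin 2) ℂ) : Prop :=
  ∃ (K : ℕ) (A : Fin K → Fin N → Matrix (Fin 2) (Fin 2) ℂ),
    (∀ k i, (A k i).PosSemidef) ∧
    ∀ x y, σ x y = ∑ k, ∏ i, A k i (x i) (y i)

/-- The second Pauli matrix. -/
def pauliY : Matrix (Fin 2) (Fin 2) ℂ := !![0, -Complex.I; Complex.I, 0]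

/-- The `N`-qubit operator acting as `σy` on each qubit in `X` and trivially elsewhere. -/
def pauliYat {N : ℕ} (X : Finset (Fin N)) :
    Matrix (Fin N → Fin 2) (Fin N → Fin 2) ℂ :=
  fun x y => ∏ i, if i ∈ X then pauliY (x i) (y i) else (if x i = y i then 1 else 0)

/-- `(σy@X) · ρ^{T_X} · (σy@X)`. -/
def tildeAt {N : ℕ} (X : Finset (Fin N))
    (ρ : Matrix (Fin N → Fin 2) (Fin N → Fin 2) ℂ) :
    Matrix (Fin N → Fin 2) (Fin N → Fin 2) ℂ :=
  pauliYat X * pt X ρ * pauliYat X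

/-- The Hankel matrix `M_l(q)` with entries `q_{i+j+l} / (N choose (i+j+l))`. -/
def hankel (N l : ℕ) (q : ℕ → ℝ) :
    Matrix (Fin ((N - l) / 2 + 1)) (Fin ((N - l) / 2 + 1)) ℝ :=
  fun i j => q ((i : ℕ) + j + l) / (N.choose ((i : ℕ) + j + l))

/-- The diagonal symmetric state `Σ_k p_k |S_k^N⟩⟨S_k^N|`. -/
def rhoDS (N : ℕ) (p : ℕ → ℝ) : Matrix (Fin N → Fin 2) (Fin N → Fin 2) ℂ :=
  fun x y => ∑ k ∈ Finset.range (N + 1), (p k : ℂ) * dicke N k x * star (dicke N k y)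

/-!
Put `m_k = q_k / (N choose k)`. A polynomial that is positive on `[0, ∞)` is a sum of polynomials
`X ^ l * g ^ 2` whose degrees do not exceed its own: each of its irreducible factors is, and such
sums are closed under multiplication. Hence positive semidefiniteness of the two Hankel matrices
makes the functional `X ^ k ↦ m_k` nonnegative on such polynomials of degree at most `N`, and by
separation `m` lies in the cone generated by the compact arc of vectors `(u ^ (N - k) v ^ k)_k`,
`u, v ≥ 0`, `u + v = 1`. For a vector `m` of this arc, `∑ k, (N choose k) m_k |S_k⟩⟨S_k|` is the
average over the phases `θ = 2πj / (N + 1)` of the projectors onto the product states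
`(√u |0⟩ + √v e^{iθ} |1⟩)^{⊗N}`, so `∑ k, q_k |S_k⟩⟨S_k|` is fully separable.
-/

section ConvexCone

variable {E : Type*} [AddCommGroup E] [Module ℝ E]

theorem disjoint_convexHull_ray {s : Set E} (h0 : 0 ∉ convexHull ℝ s) {x : E}
    (hx : x ∉ PointedCone.hull ℝ s) :
    Disjoint (convexHull ℝ s) ((fun c : ℝ => c • x) '' Set.Ici 0) := by
  rw [Set.disjoint_left]
  rintro _ hc ⟨c, hc0, rfl⟩
  rcases (Set.mem_Ici.mp hc0).eq_or_lt with rfl | hcpos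
  · exact h0 (zero_smul ℝ x ▸ hc)
  · have hsub : convexHull ℝ s ⊆ PointedCone.hull ℝ s :=
      convexHull_min PointedCone.subset_hull (PointedCone.convex _)
    refine hx ?_
    rw [← inv_smul_smul₀ hcpos.ne' x]
    exact PointedCone.smul_mem _ (inv_nonneg.mpr hcpos.le) (hsub hc)

variable [TopologicalSpace E]

theorem isCompact_convexHull [FiniteDimensional ℝ E] [ContinuousAdd E] [ContinuousSMul ℝ E]
    {s : Set E} (hs : IsCompact s) : IsCompact (convexHull ℝ s) := by
  let combination (n : ℕ) (q : (Fin n → ℝ) × (Fin n → E)) : E := ∑ i, q.1 i • q.2 i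
  have caratheodory : convexHull ℝ s = ⋃ n ∈ Finset.range (Module.finrank ℝ E + 2),
      combination n '' (stdSimplex ℝ (Fin n) ×ˢ Set.univ.pi fun _ => s) := by
    apply Set.Subset.antisymm
    · intro x hx
      obtain ⟨ι, _, z, w, hz, hind, hw, hw1, rfl⟩ := eq_pos_convex_span_of_mem_convexHull hx
      have hcard : Fintype.card ι < Module.finrank ℝ E + 2 := Nat.lt_succ_of_le <|
        hind.card_le_finrank_succ.trans (Nat.succ_le_succ (Submodule.finrank_le _))
      let e := (Fintype.equivFin ι).symm
      refine Set.mem_biUnion (Finset.mem_range.mpr hcard) ⟨(w ∘ e, z ∘ e), ⟨⟨?_, ?_⟩, ?_⟩, ?_⟩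
      · exact fun i => (hw (e i)).le
      · exact (e.sum_comp w).trans hw1
      · exact fun i _ => hz ⟨e i, rfl⟩
      · exact e.sum_comp fun i => w i • z i
    · refine Set.iUnion₂_subset fun n _ => ?_
      rintro _ ⟨⟨w, z⟩, ⟨⟨hw, hw1⟩, hz⟩, rfl⟩
      exact (convex_convexHull ℝ s).sum_mem (fun i _ => hw i) hw1
        fun i _ => subset_convexHull ℝ s (hz i trivial)
  rw [caratheodory]
  refine Finset.isCompact_biUnion _ fun n _ => IsCompact.image ?_ ?_
  · exact (isCompact_stdSimplex ℝ _).prod (isCompact_univ_pi fun _ => hs)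
  · unfold combination
    fun_prop

variable [IsTopologicalAddGroup E] [ContinuousSMul ℝ E] [LocallyConvexSpace ℝ E] [T2Space E]

theorem mem_pointedCone_hull_of_forall_pos {s : Set E} (hs : IsCompact (convexHull ℝ s))
    (h0 : 0 ∉ convexHull ℝ s) {x : E}
    (hx : ∀ f : StrongDual ℝ E, (∀ y ∈ s, 0 < f y) → 0 ≤ f x) : x ∈ PointedCone.hull ℝ s := by
  by_contra hmem
  have hx0 : x ≠ 0 := fun h => hmem (h ▸ zero_mem _)
  have hray : IsClosed ((fun c : ℝ => c • x) '' Set.Ici 0) :=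
    isClosedMap_smul_left x _ isClosed_Ici
  obtain ⟨f, u, v, hfu, huv, hvf⟩ := geometric_hahn_banach_compact_closed (convex_convexHull ℝ s) hs
    ((convex_Ici 0).linear_image (LinearMap.toSpanSingleton ℝ E x)) hray
    (disjoint_convexHull_ray h0 hmem)
  have hv : v < 0 := by simpa using hvf _ ⟨0, Set.self_mem_Ici, rfl⟩
  have hfx : 0 ≤ f x := by
    by_contra! hneg
    have := hvf _ ⟨v / f x, (div_pos_of_neg_of_neg hv hneg).le, rfl⟩
    simp [div_mul_cancel₀ _ hneg.ne] at this
  -- `-f` is positive on `s` but may vanish at `x`; subtract a small multiple of a functional `g`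
  -- with `g x = 1`.
  obtain ⟨g, hgx⟩ := SeparatingDual.exists_eq_one (R := ℝ) hx0
  obtain ⟨C, hC⟩ := hs.exists_bound_of_continuousOn g.continuous.continuousOn
  have hCpos : 0 < |C| + 1 := by positivity
  set ε := -u / (|C| + 1)
  have hε : 0 < ε := div_pos (by linarith) hCpos
  have hεC : ε * (|C| + 1) = -u := div_mul_cancel₀ _ hCpos.ne'
  have hpos : ∀ y ∈ s, 0 < (-f - ε • g) y := by
    intro y hy
    have hy := subset_convexHull ℝ s hy
    have hgy : g y ≤ |C| + 1 := by
      linarith [le_abs_self (g y), (Real.norm_eq_abs _).symm.trans_le (hC y hy), le_abs_self C]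
    have := mul_le_mul_of_nonneg_left hgy hε.le
    have := hfu y hy
    simp only [sub_apply, neg_apply, smul_apply, smul_eq_mul]
    linarith
  have := hx _ hpos
  simp only [sub_apply, neg_apply, smul_apply, smul_eq_mul, hgx] at this
  linarith

end ConvexCone

section HalfLine

open Polynomial
open scoped Matrix

/-- The truncated quadratic module of the half-line: sums of polynomials `X ^ l * g ^ 2` of degree
at most `n`. They serve as nonnegativity certificates on `[0, ∞)`. All exponents `l` are allowed,
rather than only `l = 0, 1`, so that generators are closed under multiplication. -/
def halfLineSOS (n : ℕ) : AddSubmonoid ℝ[X] :=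
  AddSubmonoid.closure {P | ∃ (l : ℕ) (g : ℝ[X]), l + 2 * g.natDegree ≤ n ∧ P = X ^ l * g ^ 2}

namespace halfLineSOS

theorem X_pow_mul_sq_mem {n l : ℕ} {g : ℝ[X]} (h : l + 2 * g.natDegree ≤ n) :
    X ^ l * g ^ 2 ∈ halfLineSOS n :=
  AddSubmonoid.subset_closure ⟨l, g, h, rfl⟩

theorem C_mem {c : ℝ} (hc : 0 ≤ c) (n : ℕ) : C c ∈ halfLineSOS n := by
  have h := X_pow_mul_sq_mem (n := n) (l := 0) (g := C √c) (by simp)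
  rwa [pow_zero, one_mul, ← C_pow, Real.sq_sqrt hc] at h

theorem mono {m n : ℕ} (h : m ≤ n) : halfLineSOS m ≤ halfLineSOS n := by
  refine AddSubmonoid.closure_mono ?_
  rintro _ ⟨l, g, hg, rfl⟩
  exact ⟨l, g, hg.trans h, rfl⟩

theorem mul_mem {m n : ℕ} {P Q : ℝ[X]} (hP : P ∈ halfLineSOS m) (hQ : Q ∈ halfLineSOS n) :
    P * Q ∈ halfLineSOS (m + n) := by
  have h := AddSubmonoid.mul_mem_mul hP hQ
  rw [halfLineSOS, halfLineSOS, AddSubmonoid.closure_mul_closure] at h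
  refine AddSubmonoid.closure_mono ?_ h
  rintro _ ⟨_, ⟨k, f, hf, rfl⟩, _, ⟨l, g, hg, rfl⟩, rfl⟩
  have := natDegree_mul_le (p := f) (q := g)
  exact ⟨k + l, f * g, by omega, by ring⟩

theorem eval_nonneg {n : ℕ} {P : ℝ[X]} (hP : P ∈ halfLineSOS n) {t : ℝ} (ht : 0 ≤ t) :
    0 ≤ P.eval t := by
  induction hP using AddSubmonoid.closure_induction with
  | mem P hP =>
    obtain ⟨l, g, -, rfl⟩ := hP
    rw [eval_mul, eval_pow, eval_pow, eval_X]
    positivity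
  | zero => simp
  | add P Q _ _ hP hQ => simpa using add_nonneg hP hQ

theorem X_sub_C_mem {a : ℝ} (ha : a ≤ 0) : X - C a ∈ halfLineSOS 1 := by
  have hX : (X : ℝ[X]) ∈ halfLineSOS 1 := by
    simpa using X_pow_mul_sq_mem (n := 1) (l := 1) (g := 1) (by simp)
  simpa [sub_eq_add_neg] using add_mem hX (C_mem (neg_nonneg.mpr ha) 1)

theorem quadratic_mem (z : ℂ) : X ^ 2 - C (2 * z.re) * X + C (‖z‖ ^ 2) ∈ halfLineSOS 2 := by
  have hsq : X ^ 2 - C (2 * z.re) * X + C (‖z‖ ^ 2) = (X - C z.re) ^ 2 + C (z.im ^ 2) := by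
    rw [← Complex.normSq_eq_norm_sq, Complex.normSq_apply]
    simp only [map_add, map_mul, map_pow, map_ofNat]
    ring
  have hmem := X_pow_mul_sq_mem (n := 2) (l := 0) (g := X - C z.re) (by simp)
  rw [pow_zero, one_mul] at hmem
  rw [hsq]
  exact add_mem hmem (C_mem (sq_nonneg _) 2)

theorem exists_dvd_mem {P : ℝ[X]} (hdeg : 0 < P.natDegree) (hpos : ∀ t, 0 ≤ t → 0 < P.eval t) :
    ∃ p, p ∣ P ∧ 0 < p.natDegree ∧ p ∈ halfLineSOS p.natDegree := by
  obtain ⟨z, hz⟩ : ∃ z : ℂ, aeval z P = 0 :=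
    IsAlgClosed.exists_aeval_eq_zero ℂ P (natDegree_pos_iff_degree_pos.mp hdeg).ne'
  by_cases him : z.im = 0
  · have hroot : P.IsRoot z.re := by
      rw [← Complex.conj_eq_iff_im, Complex.conj_eq_iff_re] at him
      rw [← him, ← Complex.coe_algebraMap, aeval_algebraMap_apply] at hz
      simpa using hz
    have hneg : z.re ≤ 0 := by
      by_contra! h
      exact (hpos _ h.le).ne' hroot
    refine ⟨X - C z.re, dvd_iff_isRoot.mpr hroot, ?_⟩
    rw [natDegree_X_sub_C]
    exact ⟨one_pos, X_sub_C_mem hneg⟩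
  · refine ⟨_, P.quadratic_dvd_of_aeval_eq_zero_im_ne_zero hz him, ?_⟩
    have hdeg2 : (X ^ 2 - C (2 * z.re) * X + C (‖z‖ ^ 2) : ℝ[X]).natDegree = 2 := by compute_degree!
    rw [hdeg2]
    exact ⟨two_pos, quadratic_mem z⟩

theorem mem_natDegree_of_pos (P : ℝ[X]) (hpos : ∀ t, 0 ≤ t → 0 < P.eval t) :
    P ∈ halfLineSOS P.natDegree := by
  induction hn : P.natDegree using Nat.strong_induction_on generalizing P with
  | _ n ih =>
    rcases Nat.eq_zero_or_pos n with rfl | hn0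
    · have hP := eq_C_of_natDegree_eq_zero hn
      rw [hP, coeff_zero_eq_eval_zero]
      exact C_mem (hpos 0 le_rfl).le 0
    · obtain ⟨p, ⟨Q, rfl⟩, hp0, hp⟩ := exists_dvd_mem (hn ▸ hn0) hpos
      have hprod : p * Q ≠ 0 := ne_zero_of_natDegree_gt (hn ▸ hn0)
      rw [natDegree_mul (left_ne_zero_of_mul hprod) (right_ne_zero_of_mul hprod)] at hn
      have hQpos : ∀ t, 0 ≤ t → 0 < Q.eval t := fun t ht =>
        pos_of_mul_pos_right (eval_mul (p := p) ▸ hpos t ht) (eval_nonneg hp ht)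
      rw [← hn]
      exact mul_mem hp (ih _ (by omega) Q hQpos rfl)

end halfLineSOS

/-- The Riesz functional `X ^ k ↦ m k` of a sequence `m`. -/
def rieszFunctional (m : ℕ → ℝ) : ℝ[X] →ₗ[ℝ] ℝ :=
  Polynomial.lsum fun k => m k • LinearMap.id

theorem rieszFunctional_monomial (m : ℕ → ℝ) (k : ℕ) (c : ℝ) :
    rieszFunctional m (monomial k c) = c * m k := by
  simp [rieszFunctional, mul_comm]

theorem rieszFunctional_pow (t : ℝ) (P : ℝ[X]) : rieszFunctional (t ^ ·) P = P.eval t := by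
  simp [rieszFunctional, lsum_apply, eval_eq_sum, mul_comm]

/-- The moment matrix of size `d + 1` of a sequence `m` shifted by `l`. -/
def momentMatrix (m : ℕ → ℝ) (l d : ℕ) : Matrix (Fin (d + 1)) (Fin (d + 1)) ℝ :=
  .of fun i j => m (i + j + l)

theorem rieszFunctional_X_pow_mul_sq (m : ℕ → ℝ) (l : ℕ) {d : ℕ} {g : ℝ[X]}
    (hg : g.natDegree ≤ d) :
    rieszFunctional m (X ^ l * g ^ 2) =
      (fun i : Fin (d + 1) => g.coeff i) ⬝ᵥ momentMatrix m l d *ᵥ fun i => g.coeff i := by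
  have hsum : g = ∑ i : Fin (d + 1), monomial (i : ℕ) (g.coeff i) := by
    rw [Fin.sum_univ_eq_sum_range (fun i => monomial i (g.coeff i))]
    exact g.as_sum_range' _ (by omega)
  have hsq : X ^ l * g ^ 2 = ∑ i : Fin (d + 1), ∑ j : Fin (d + 1),
      monomial ((i : ℕ) + j + l) (g.coeff i * g.coeff j) := by
    conv_lhs => rw [hsum, sq, Finset.sum_mul_sum, Finset.mul_sum]
    simp only [Finset.mul_sum, monomial_mul_monomial, X_pow_mul_monomial]
  simp only [hsq, map_sum, rieszFunctional_monomial, dotProduct, Matrix.mulVec, momentMatrix,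
    Matrix.of_apply, Finset.mul_sum]
  exact Finset.sum_congr rfl fun i _ => Finset.sum_congr rfl fun j _ => by ring

theorem rieszFunctional_nonneg {n : ℕ} {m : ℕ → ℝ} (h0 : (momentMatrix m 0 (n / 2)).PosSemidef)
    (h1 : (momentMatrix m 1 ((n - 1) / 2)).PosSemidef) {P : ℝ[X]} (hP : P ∈ halfLineSOS n) :
    0 ≤ rieszFunctional m P := by
  induction hP using AddSubmonoid.closure_induction with
  | mem P hP =>
    obtain ⟨l, g, hg, rfl⟩ := hP
    have hdeg : (X ^ (l / 2) * g).natDegree ≤ l / 2 + g.natDegree := by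
      simpa using natDegree_mul_le (p := (X : ℝ[X]) ^ (l / 2)) (q := g)
    have hreduce : X ^ l * g ^ 2 = X ^ (l % 2) * (X ^ (l / 2) * g) ^ 2 := by
      conv_lhs => rw [← Nat.mod_add_div l 2]
      ring
    rw [hreduce]
    rcases Nat.mod_two_eq_zero_or_one l with hl | hl <;> rw [hl]
    · rw [rieszFunctional_X_pow_mul_sq m 0 (d := n / 2) (by omega)]
      exact h0.dotProduct_mulVec_nonneg _
    · rw [rieszFunctional_X_pow_mul_sq m 1 (d := (n - 1) / 2) (by omega)]
      exact h1.dotProduct_mulVec_nonneg _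
  | zero => simp
  | add P Q _ _ hP hQ => simpa using add_nonneg hP hQ

theorem exists_rieszFunctional_eq {n : ℕ} (f : (Fin (n + 1) → ℝ) →ₗ[ℝ] ℝ) :
    ∃ P : ℝ[X], P.natDegree ≤ n ∧ ∀ m : ℕ → ℝ, rieszFunctional m P = f fun k => m k := by
  refine ⟨∑ k : Fin (n + 1), monomial (k : ℕ) (f fun j => if k = j then 1 else 0), ?_, fun m => ?_⟩
  · exact natDegree_sum_le_of_forall_le _ _ fun k _ => (natDegree_monomial_le _).trans (by omega)
  · rw [f.pi_apply_eq_sum_univ]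
    simp only [map_sum, rieszFunctional_monomial, smul_eq_mul, mul_comm]

/-- The homogeneous moment curve; `momentCurve n 1 t` lists the powers of `t` up to the `n`-th. -/
def momentCurve (n : ℕ) (u v : ℝ) : Fin (n + 1) → ℝ :=
  fun k => u ^ (n - (k : ℕ)) * v ^ (k : ℕ)

theorem momentCurve_mul (n : ℕ) (c u v : ℝ) :
    momentCurve n (c * u) (c * v) = c ^ n • momentCurve n u v := by
  funext k
  have hk : c ^ n = c ^ (n - (k : ℕ)) * c ^ (k : ℕ) := by rw [← pow_add]; congr 1; omega
  simp only [momentCurve, Pi.smul_apply, smul_eq_mul, hk]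
  ring

/-- The compact arc `u + v = 1` of the moment curve. It meets every ray through a moment vector of a
point of `[0, ∞]`, the point at infinity being `(u, v) = (0, 1)`. -/
def momentArc (n : ℕ) : Set (Fin (n + 1) → ℝ) :=
  (fun b => momentCurve n (1 - b) b) '' Set.Icc 0 1

theorem isCompact_momentArc (n : ℕ) : IsCompact (momentArc n) := by
  refine isCompact_Icc.image ?_
  unfold momentCurve
  fun_prop

theorem zero_notMem_convexHull_momentArc (n : ℕ) : 0 ∉ convexHull ℝ (momentArc n) := by
  have hconv : Convex ℝ {m : Fin (n + 1) → ℝ | 0 < m 0 + m (Fin.last n)} :=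
    (convex_Ioi 0).linear_preimage
      (LinearMap.proj (R := ℝ) (φ := fun _ : Fin (n + 1) => ℝ) 0 + LinearMap.proj (Fin.last n))
  have harc : momentArc n ⊆ {m | 0 < m 0 + m (Fin.last n)} := by
    rintro _ ⟨b, ⟨hb0, hb1⟩, rfl⟩
    have hb1 : 0 ≤ 1 - b := sub_nonneg.mpr hb1
    simp only [momentCurve, Set.mem_ofPred_eq, Fin.val_zero, Fin.val_last, Nat.sub_zero, pow_zero,
      mul_one, Nat.sub_self, one_mul]
    rcases hb0.eq_or_lt with rfl | hb0
    · rw [sub_zero, one_pow]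
      positivity
    · positivity
  intro h
  simpa using convexHull_min harc hconv h

theorem pos_momentCurve_one_of_pos_momentArc {n : ℕ} {f : (Fin (n + 1) → ℝ) →ₗ[ℝ] ℝ}
    (hf : ∀ m ∈ momentArc n, 0 < f m) {t : ℝ} (ht : 0 ≤ t) : 0 < f (momentCurve n 1 t) := by
  have ht1 : 0 < 1 + t := by positivity
  have hmem : momentCurve n (1 - t / (1 + t)) (t / (1 + t)) ∈ momentArc n :=
    ⟨_, ⟨by positivity, div_le_one_of_le₀ (by linarith) ht1.le⟩, rfl⟩
  have hscale : momentCurve n 1 t =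
      (1 + t) ^ n • momentCurve n (1 - t / (1 + t)) (t / (1 + t)) := by
    rw [← momentCurve_mul, mul_div_cancel₀ _ ht1.ne', mul_sub, mul_div_cancel₀ _ ht1.ne']
    ring_nf
  rw [hscale, map_smul, smul_eq_mul]
  exact mul_pos (pow_pos ht1 n) (hf _ hmem)

theorem mem_hull_momentArc {n : ℕ} {m : ℕ → ℝ} (h0 : (momentMatrix m 0 (n / 2)).PosSemidef)
    (h1 : (momentMatrix m 1 ((n - 1) / 2)).PosSemidef) :
    (fun k : Fin (n + 1) => m k) ∈ PointedCone.hull ℝ (momentArc n) := by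
  refine mem_pointedCone_hull_of_forall_pos (isCompact_convexHull (isCompact_momentArc n))
    (zero_notMem_convexHull_momentArc n) fun f hf => ?_
  obtain ⟨P, hdeg, hP⟩ := exists_rieszFunctional_eq f.toLinearMap
  have hpos : ∀ t, 0 ≤ t → 0 < P.eval t := by
    intro t ht
    have hcurve : (fun k : Fin (n + 1) => t ^ (k : ℕ)) = momentCurve n 1 t := by
      funext k
      simp [momentCurve]
    rw [← rieszFunctional_pow, hP, hcurve]
    exact pos_momentCurve_one_of_pos_momentArc hf ht
  have hmem : P ∈ halfLineSOS n := halfLineSOS.mono hdeg (halfLineSOS.mem_natDegree_of_pos P hpos)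
  simpa [hP] using rieszFunctional_nonneg h0 h1 hmem

end HalfLine

section Separability

/-- The tensor product of one-qubit matrices. -/
def productMatrix {N : ℕ} (A : Fin N → Matrix (Fin 2) (Fin 2) ℂ) :
    Matrix (Fin N → Fin 2) (Fin N → Fin 2) ℂ :=
  .of fun x y => ∏ i, A i (x i) (y i)

theorem fullySep_productMatrix {N : ℕ} {A : Fin N → Matrix (Fin 2) (Fin 2) ℂ}
    (hA : ∀ i, (A i).PosSemidef) : FullySep (productMatrix A) :=
  ⟨1, fun _ => A, fun _ => hA, by simp [productMatrix]⟩

theorem FullySep.zero (N : ℕ) : FullySep (0 : Matrix (Fin N → Fin 2) (Fin N → Fin 2) ℂ) :=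
  ⟨0, Fin.elim0, fun k => k.elim0, by simp⟩

theorem FullySep.add {N : ℕ} {σ τ : Matrix (Fin N → Fin 2) (Fin N → Fin 2) ℂ}
    (hσ : FullySep σ) (hτ : FullySep τ) : FullySep (σ + τ) := by
  obtain ⟨K, A, hA, hσA⟩ := hσ
  obtain ⟨L, B, hB, hτB⟩ := hτ
  refine ⟨K + L, Fin.append A B, fun k => ?_, fun x y => ?_⟩
  · refine Fin.addCases (fun k i => ?_) (fun l i => ?_) k
    · simpa using hA k i
    · simpa using hB l i
  · simp [Fin.sum_univ_add, hσA, hτB]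

theorem FullySep.smul {N : ℕ} [NeZero N] {σ : Matrix (Fin N → Fin 2) (Fin N → Fin 2) ℂ}
    (hσ : FullySep σ) {c : ℝ} (hc : 0 ≤ c) : FullySep (c • σ) := by
  obtain ⟨K, A, hA, hσA⟩ := hσ
  refine ⟨K, fun k i => c ^ (N : ℝ)⁻¹ • A k i,
    fun k i => (hA k i).smul (Real.rpow_nonneg hc _), fun x y => ?_⟩
  have hroot : (c ^ (N : ℝ)⁻¹) ^ N = c := Real.rpow_inv_natCast_pow hc (NeZero.ne N)
  simp only [Matrix.smul_apply, hσA, Finset.smul_sum, Finset.prod_smul, Finset.prod_const,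
    Finset.card_univ, Fintype.card_fin, hroot]

/-- The cone of unnormalised fully separable states. For `N = 0` the empty tensor product is `1`, so
that only natural multiples of it satisfy `FullySep` and there is no such cone. -/
def fullySepCone (N : ℕ) [NeZero N] : PointedCone ℝ (Matrix (Fin N → Fin 2) (Fin N → Fin 2) ℂ) where
  carrier := {σ | FullySep σ}
  add_mem' := FullySep.add
  zero_mem' := FullySep.zero N
  smul_mem' c _ hσ := hσ.smul c.2

/-- The Hamming weight of a bit string, as an index of the Dicke states. -/
def weight {N : ℕ} (x : Fin N → Fin 2) : Fin (N + 1) :=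
  ⟨(Finset.univ.filter fun i => x i = 1).card, Nat.lt_succ_of_le (card_finset_fin_le _)⟩

theorem prod_apply_eq_pow_weight {R : Type*} [CommMonoid R] {N : ℕ} (ψ : Fin 2 → R)
    (x : Fin N → Fin 2) :
    ∏ i, ψ (x i) = ψ 0 ^ (N - (weight x : ℕ)) * ψ 1 ^ (weight x : ℕ) := by
  have hψ (i : Fin N) : ψ (x i) = if x i = 1 then ψ 1 else ψ 0 := by
    obtain h | h : x i = 0 ∨ x i = 1 := by omega
    all_goals simp [h]
  have hcard := Finset.card_filter_add_card_filter_not (s := Finset.univ) fun i => x i = 1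
  rw [Finset.card_univ, Fintype.card_fin] at hcard
  simp only [hψ, Finset.prod_ite, Finset.prod_const]
  rw [mul_comm, eq_tsub_of_add_eq ((add_comm _ _).trans hcard)]
  rfl

/-- The matrix `∑ k, (N choose k) m_k |S_k⟩⟨S_k|`, written entrywise. -/
def dickeDiagonal (N : ℕ) :
    (Fin (N + 1) → ℝ) →ₗ[ℝ] Matrix (Fin N → Fin 2) (Fin N → Fin 2) ℂ where
  toFun m := .of fun x y => if weight x = weight y then (m (weight x) : ℂ) else 0
  map_add' m m' := by ext x y; by_cases h : weight x = weight y <;> simp [h]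
  map_smul' c m := by ext x y; by_cases h : weight x = weight y <;> simp [h]

theorem dicke_eq (N : ℕ) (k : Fin (N + 1)) (x : Fin N → Fin 2) :
    dicke N k x = if weight x = k then (((√(N.choose k))⁻¹ : ℝ) : ℂ) else 0 := by
  simp [dicke, weight, Fin.ext_iff]

theorem rhoDS_eq_dickeDiagonal (N : ℕ) (q : ℕ → ℝ) :
    rhoDS N q = dickeDiagonal N fun k => q k / N.choose k := by
  ext x y
  rw [rhoDS, Finset.sum_range fun k => (q k : ℂ) * dicke N k x * star (dicke N k y),
    Finset.sum_eq_single (weight x)]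
  · have hnorm : (√(N.choose (weight x)))⁻¹ * (√(N.choose (weight x)))⁻¹ =
        ((N.choose (weight x) : ℝ))⁻¹ := by
      rw [← mul_inv, Real.mul_self_sqrt (Nat.cast_nonneg _)]
    simp only [dicke_eq, dickeDiagonal, LinearMap.coe_mk, AddHom.coe_mk, Matrix.of_apply, if_true,
      eq_comm (a := weight y)]
    split_ifs with h
    · rw [Complex.star_def, Complex.conj_ofReal, mul_assoc, ← Complex.ofReal_mul, hnorm,
        ← Complex.ofReal_mul, div_eq_mul_inv]
    · simp
  · intro k _ hk
    simp [dicke_eq, hk.symm]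
  · simp

theorem sum_stdAddChar_pow_mul_star_pow {N : ℕ} (a b : Fin (N + 1)) :
    ∑ j : ZMod (N + 1), ZMod.stdAddChar j ^ (a : ℕ) * star (ZMod.stdAddChar j) ^ (b : ℕ) =
      if a = b then (N + 1 : ℂ) else 0 := by
  have hterm (j : ZMod (N + 1)) :
      ZMod.stdAddChar j ^ (a : ℕ) * star (ZMod.stdAddChar j) ^ (b : ℕ) =
        ZMod.stdAddChar (j * ((a : ℕ) - (b : ℕ) : ZMod (N + 1))) := by
    rw [Complex.star_def, ← AddChar.map_neg_eq_conj, ← AddChar.map_nsmul_eq_pow,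
      ← AddChar.map_nsmul_eq_pow, ← AddChar.map_add_eq_mul, nsmul_eq_mul, nsmul_eq_mul]
    ring_nf
  have hcast : ((a : ℕ) - (b : ℕ) : ZMod (N + 1)) = 0 ↔ a = b := by
    rw [sub_eq_zero, ZMod.natCast_eq_natCast_iff', Nat.mod_eq_of_lt a.2, Nat.mod_eq_of_lt b.2,
      Fin.val_inj]
  simp only [hterm, AddChar.sum_mulShift _ (ZMod.isPrimitive_stdAddChar (N + 1)), hcast, ZMod.card]
  push_cast
  rfl

/-- The vector `√u |0⟩ + √v e^{2πij/(N+1)} |1⟩`. -/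
def phaseQubit (N : ℕ) (u v : ℝ) (j : ZMod (N + 1)) : Fin 2 → ℂ :=
  ![(√u : ℂ), √v * ZMod.stdAddChar j]

/-- The projector onto the `N`-fold tensor power of `phaseQubit N u v j`. -/
def phaseProduct (N : ℕ) (u v : ℝ) (j : ZMod (N + 1)) :
    Matrix (Fin N → Fin 2) (Fin N → Fin 2) ℂ :=
  productMatrix fun _ => Matrix.vecMulVec (phaseQubit N u v j) (star (phaseQubit N u v j))

theorem phaseProduct_apply (N : ℕ) (u v : ℝ) (j : ZMod (N + 1)) (x y : Fin N → Fin 2) :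
    phaseProduct N u v j x y =
      √u ^ (N - (weight x : ℕ)) * √v ^ (weight x : ℕ) *
        (√u ^ (N - (weight y : ℕ)) * √v ^ (weight y : ℕ)) *
        (ZMod.stdAddChar j ^ (weight x : ℕ) * star (ZMod.stdAddChar j) ^ (weight y : ℕ)) := by
  simp only [phaseProduct, productMatrix, Matrix.of_apply, Matrix.vecMulVec_apply,
    Finset.prod_mul_distrib, prod_apply_eq_pow_weight]
  simp only [phaseQubit, Matrix.cons_val_zero, Matrix.cons_val_one, Matrix.cons_val_fin_one,
    mul_pow, Pi.star_apply, RCLike.star_def, Complex.conj_ofReal, star_mul']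
  ring

theorem sum_phaseProduct (N : ℕ) {u v : ℝ} (hu : 0 ≤ u) (hv : 0 ≤ v) :
    ∑ j, phaseProduct N u v j = (N + 1 : ℝ) • dickeDiagonal N (momentCurve N u v) := by
  ext x y
  simp only [Matrix.sum_apply, phaseProduct_apply, ← Finset.mul_sum,
    sum_stdAddChar_pow_mul_star_pow]
  simp only [Matrix.smul_apply, dickeDiagonal, LinearMap.coe_mk, AddHom.coe_mk, Matrix.of_apply,
    momentCurve]
  split_ifs with h
  · have hsqrt {r : ℝ} (hr : 0 ≤ r) : (√r : ℂ) * √r = r := by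
      rw [← Complex.ofReal_mul, Real.mul_self_sqrt hr]
    rw [← h, mul_mul_mul_comm, ← mul_pow, ← mul_pow, hsqrt hu, hsqrt hv, Complex.real_smul]
    push_cast
    ring
  · simp

theorem fullySep_dickeDiagonal_of_mem_momentArc {N : ℕ} [NeZero N] {m : Fin (N + 1) → ℝ}
    (hm : m ∈ momentArc N) : FullySep (dickeDiagonal N m) := by
  obtain ⟨b, ⟨hb0, hb1⟩, rfl⟩ := hm
  have hsum : FullySep (∑ j, phaseProduct N (1 - b) b j) :=
    sum_mem (S := fullySepCone N) fun j _ =>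
      fullySep_productMatrix fun _ => Matrix.posSemidef_vecMulVec_self_star _
  rw [sum_phaseProduct N (sub_nonneg.mpr hb1) hb0] at hsum
  have hN : (0 : ℝ) < N + 1 := by positivity
  simpa only [inv_smul_smul₀ hN.ne'] using hsum.smul (inv_nonneg.mpr hN.le)

theorem symProj_add_smul_rhoDS (N : ℕ) (p : ℕ → ℝ) (α : ℝ) :
    symProj N + (α : ℂ) • rhoDS N p = rhoDS N fun k => 1 + α * p k := by
  ext x y
  simp only [Matrix.add_apply, Matrix.smul_apply, symProj, rhoDS, smul_eq_mul, Finset.mul_sum,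
    ← Finset.sum_add_distrib]
  refine Finset.sum_congr rfl fun k _ => ?_
  push_cast
  ring

theorem stmt8_general (N : ℕ) (hN : 0 < N) (q : ℕ → ℝ) (h0 : (hankel N 0 q).PosSemidef)
    (h1 : (hankel N 1 q).PosSemidef) : FullySep (rhoDS N q) := by
  have : NeZero N := ⟨hN.ne'⟩
  have hcone : PointedCone.hull ℝ (momentArc N) ≤ (fullySepCone N).comap (dickeDiagonal N) :=
    Submodule.span_le.mpr fun _ => fullySep_dickeDiagonal_of_mem_momentArc
  rw [rhoDS_eq_dickeDiagonal]
  exact hcone (mem_hull_momentArc (m := fun k => q k / N.choose k) h0 h1)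

end Separability

/-- If the Hankel matrices of `q_k = 1 + α p_k` are PSD, then `𝟙_S + α ρ_DS` is
fully separable. -/
theorem stmt8 (N : ℕ) (hN : 2 ≤ N) (p : ℕ → ℝ) (hp : ∀ k ≤ N, 0 ≤ p k)
    (hsum : ∑ k ∈ Finset.range (N + 1), p k = 1) (α : ℝ)
    (h0 : (hankel N 0 (fun k => 1 + α * p k)).PosSemidef)
    (h1 : (hankel N 1 (fun k => 1 + α * p k)).PosSemidef) :
    FullySep (symProj N + (α : ℂ) • rhoDS N p) :=
  symProj_add_smul_rhoDS N p α ▸ stmt8_general N (by omega) _ h0 h1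
end
end

section
/- Let N ≥ 2, let α, β be real numbers with α ≥ max(−1, β/2 − 1), β ≥ max(−1, α/2 − 1) and α² ≠ β², and let σ be an N-qubit operator. If the matrix (1/(α² − β²))·[α·σ − β·σ̃_A − ((α − β)/(2^N + α + β))·Tr(σ)·𝟙] is positive semidefinite, then σ is biseparable across the 1:(N−1) bipartition at qubit 0. -/
open scoped ComplexOrder

noncomputable section

/-!
For a qubit `A` and any system `B`, let `R τ = 𝟙 ⊗ Tr_A τ - τ`. On the first of `N` qubits this is
`τ ↦ τ̃_A`, since `σy Mᵀ σy = Tr M • 𝟙 - M` for `2 × 2` matrices. As `R` is a trace-preserving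
involution fixing `𝟙`, the matrix assumed positive is `Λ⁻¹ σ` for `Λ τ = Tr τ • 𝟙 + α τ + β R τ`, so
it suffices that `Λ` maps positive matrices to separable ones, and by linearity only rank-one
matrices matter.

Write `ψ = s e ⊗ u + t f ⊗ v` in Schmidt form. Then `Λ (ψ ψ*)` is a nonnegative multiple of the
product `𝟙 ⊗ (𝟙 - u u* - v v*)` plus an operator supported on `span {e, f} ⊗ span {u, v}` whose only
off-diagonal entries are `(α - β) s t`, coupling `e ⊗ u` with `f ⊗ v`. Such an operator is separable
as soon as it and its partial transpose satisfy the `2 × 2` determinant conditions: the off-diagonal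
part is produced by averaging the projectors on `(e + ω x f) ⊗ (p u + ω̄ q v)` over the fourth roots
of unity `ω`. Here the determinant conditions follow from `|α - β| ≤ α + 2` and `|α - β| ≤ β + 2`.
-/

section Bipartite

open Matrix
open scoped Kronecker MatrixOrder

variable {m n : Type*}

/-- The rank-one operator `|u⟩⟨v|`. -/
abbrev ketBra (u v : m → ℂ) : Matrix m m ℂ := vecMulVec u (star v)

/-- The convex cone of (unnormalised) separable operators on a bipartite system `m × n`, generated
by the products of positive semidefinite matrices. -/
def sepCone (m n : Type*) : AddSubmonoid (Matrix (m × n) (m × n) ℂ) :=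
  AddSubmonoid.closure {M | ∃ (A : Matrix m m ℂ) (B : Matrix n n ℂ),
    A.PosSemidef ∧ B.PosSemidef ∧ M = A ⊗ₖ B}

theorem kronecker_mem_sepCone {A : Matrix m m ℂ} {B : Matrix n n ℂ}
    (hA : A.PosSemidef) (hB : B.PosSemidef) : A ⊗ₖ B ∈ sepCone m n :=
  AddSubmonoid.subset_closure ⟨A, B, hA, hB, rfl⟩

theorem smul_mem_sepCone {c : ℝ} (hc : 0 ≤ c) {M : Matrix (m × n) (m × n) ℂ}
    (hM : M ∈ sepCone m n) : c • M ∈ sepCone m n := by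
  induction hM using AddSubmonoid.closure_induction with
  | mem M hM =>
    obtain ⟨A, B, hA, hB, rfl⟩ := hM
    rw [← smul_kronecker]
    exact kronecker_mem_sepCone (hA.smul hc) hB
  | zero => simpa only [smul_zero] using zero_mem _
  | add M M' _ _ hM hM' => simpa only [smul_add] using add_mem hM hM'

theorem exists_eq_sum_kronecker_of_mem_sepCone {M : Matrix (m × n) (m × n) ℂ}
    (hM : M ∈ sepCone m n) :
    ∃ (K : ℕ) (A : Fin K → Matrix m m ℂ) (B : Fin K → Matrix n n ℂ),
      (∀ k, (A k).PosSemidef) ∧ (∀ k, (B k).PosSemidef) ∧ M = ∑ k, A k ⊗ₖ B k := by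
  obtain ⟨l, hl, rfl⟩ := AddSubmonoid.exists_list_of_mem_closure hM
  choose A B hA hB hAB using fun k : Fin l.length => hl l[k] (List.getElem_mem k.2)
  refine ⟨l.length, A, B, hA, hB, ?_⟩
  simp only [← hAB, Fin.getElem_fin, Fin.sum_univ_getElem]

/-- Averaging over the phases `ω ∈ {1, -1, i, -i}` kills every term containing a nonzero power
of `ω`. -/
theorem sum_phase_ketBra_kronecker (e f : m → ℂ) (u v : n → ℂ) :
    let P (ω : ℂ) := ketBra (e + ω • f) (e + ω • f) ⊗ₖ ketBra (u + star ω • v) (u + star ω • v)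
    P 1 + P (-1) + P Complex.I + P (-Complex.I) =
      (4 : ℝ) • ((ketBra e e + ketBra f f) ⊗ₖ (ketBra u u + ketBra v v) +
        (ketBra e f ⊗ₖ ketBra u v + ketBra f e ⊗ₖ ketBra v u)) := by
  ext p q
  simp only [one_smul, star_one, neg_smul, star_neg, RCLike.star_def, Complex.conj_I, neg_neg,
    Matrix.add_apply, kroneckerMap_apply, vecMulVec_apply, Pi.add_apply, Pi.star_apply, star_add,
    Pi.neg_apply, Pi.smul_apply, smul_eq_mul, star_mul', neg_mul, Matrix.smul_apply, smul_add,
    Complex.real_smul, Complex.ofReal_ofNat]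
  ring_nf
  simp only [Complex.I_sq, Complex.I_pow_four]
  ring

theorem cross_mem_sepCone [Finite m] [Finite n] (e f : m → ℂ) (u v : n → ℂ) :
    (ketBra e e + ketBra f f) ⊗ₖ (ketBra u u + ketBra v v) +
      (ketBra e f ⊗ₖ ketBra u v + ketBra f e ⊗ₖ ketBra v u) ∈ sepCone m n := by
  have product_mem (ω : ℂ) : ketBra (e + ω • f) (e + ω • f) ⊗ₖ
      ketBra (u + star ω • v) (u + star ω • v) ∈ sepCone m n :=
    kronecker_mem_sepCone (posSemidef_vecMulVec_self_star _) (posSemidef_vecMulVec_self_star _)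
  have hsum := add_mem (add_mem (add_mem (product_mem 1) (product_mem (-1)))
    (product_mem Complex.I)) (product_mem (-Complex.I))
  rw [sum_phase_ketBra_kronecker] at hsum
  simpa only [smul_smul, inv_mul_cancel₀ (four_ne_zero' ℝ), one_smul] using
    smul_mem_sepCone (c := 4⁻¹) (by norm_num) hsum

theorem exists_mul_sqrt_mul_sqrt_eq {a b c d γ : ℝ} (ha : 0 ≤ a) (hb : 0 ≤ b) (hc : 0 ≤ c)
    (hd : 0 ≤ d) (had : γ ^ 2 ≤ a * d) (hbc : γ ^ 2 ≤ b * c) :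
    ∃ x : ℝ, x * (√a * √b) = γ ∧ x ^ 2 * a ≤ c ∧ x ^ 2 * b ≤ d := by
  rcases eq_or_ne γ 0 with rfl | hγ
  · exact ⟨0, by simp, by simpa using hc, by simpa using hd⟩
  have ha' : 0 < a := ha.lt_of_ne' fun h => hγ (by simpa [h] using had)
  have hb' : 0 < b := hb.lt_of_ne' fun h => hγ (by simpa [h] using hbc)
  have hx2 : (γ / (√a * √b)) ^ 2 = γ ^ 2 / (a * b) := by
    rw [div_pow, mul_pow, Real.sq_sqrt ha, Real.sq_sqrt hb]
  refine ⟨γ / (√a * √b), by field_simp, ?_, ?_⟩ <;> rw [hx2]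
  · calc γ ^ 2 / (a * b) * a = γ ^ 2 / b := by field_simp
      _ ≤ c := by rwa [div_le_iff₀' hb']
  · calc γ ^ 2 / (a * b) * b = γ ^ 2 / a := by field_simp
      _ ≤ d := by rwa [div_le_iff₀' ha']

/-- The operator of `X` shape on `span {e, f} ⊗ span {u, v}` with weights `a`, `b`, `c`, `d` on the
product vectors `e ⊗ u`, `e ⊗ v`, `f ⊗ u`, `f ⊗ v` and a coherence `γ` between `e ⊗ u` and
`f ⊗ v`. -/
def xForm (e f : m → ℂ) (u v : n → ℂ) (a b c d γ : ℝ) : Matrix (m × n) (m × n) ℂ :=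
  ketBra e e ⊗ₖ (a • ketBra u u + b • ketBra v v) +
    ketBra f f ⊗ₖ (c • ketBra u u + d • ketBra v v) +
    γ • (ketBra e f ⊗ₖ ketBra u v + ketBra f e ⊗ₖ ketBra v u)

theorem xForm_mem_sepCone [Finite m] [Finite n] (e f : m → ℂ) (u v : n → ℂ) {a b c d γ : ℝ}
    (ha : 0 ≤ a) (hb : 0 ≤ b) (hc : 0 ≤ c) (hd : 0 ≤ d)
    (had : γ ^ 2 ≤ a * d) (hbc : γ ^ 2 ≤ b * c) : xForm e f u v a b c d γ ∈ sepCone m n := by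
  obtain ⟨x, hxγ, hxc, hxd⟩ := exists_mul_sqrt_mul_sqrt_eq ha hb hc hd had hbc
  have remainder_psd :
      ((c - x ^ 2 * a) • ketBra u u + (d - x ^ 2 * b) • ketBra v v).PosSemidef :=
    ((posSemidef_vecMulVec_self_star u).smul (sub_nonneg.2 hxc)).add
      ((posSemidef_vecMulVec_self_star v).smul (sub_nonneg.2 hxd))
  convert add_mem (cross_mem_sepCone e (x • f) (√a • u) (√b • v))
    (kronecker_mem_sepCone (posSemidef_vecMulVec_self_star f) remainder_psd) using 1
  simp only [xForm, ketBra, ← hxγ, star_smul, star_trivial, smul_vecMulVec, vecMulVec_smul,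
    smul_kronecker, kronecker_smul, add_kronecker, kronecker_add, smul_smul, Real.mul_self_sqrt ha,
    Real.mul_self_sqrt hb]
  module

theorem posSemidef_one_sub_conjTranspose_mul_self [Fintype m] [Fintype n] [DecidableEq n]
    {V : Matrix m n ℂ} (hV : V * Vᴴ * V = V) : (1 - Vᴴ * V).PosSemidef := by
  have isStarProjection : IsStarProjection (Vᴴ * V) :=
    { isIdempotentElem := by rw [IsIdempotentElem, Matrix.mul_assoc, ← Matrix.mul_assoc V, hV]
      isSelfAdjoint := isHermitian_conjTranspose_mul_self V }
  exact nonneg_iff_posSemidef.1 isStarProjection.one_sub_nonneg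

theorem exists_unitary_mul_orthogonal_rows [Fintype m] [Fintype n] [DecidableEq m]
    (Ψ : Matrix m n ℂ) :
    ∃ U ∈ unitaryGroup m ℂ, ∃ (s : m → ℝ) (Φ : Matrix m n ℂ),
      Ψ = U * Φ ∧ Φ * Φᴴ = diagonal fun i => (s i : ℂ) ^ 2 := by
  have hG : (Ψ * Ψᴴ).PosSemidef := posSemidef_self_mul_conjTranspose Ψ
  set U := hG.isHermitian.eigenvectorUnitary
  refine ⟨U, U.2, fun i => √(hG.isHermitian.eigenvalues i), star (U : Matrix m m ℂ) * Ψ, ?_, ?_⟩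
  · rw [← Matrix.mul_assoc, Unitary.mul_star_self_of_mem U.2, Matrix.one_mul]
  · have diagonalization := hG.isHermitian.conjStarAlgAut_star_eigenvectorUnitary
    rw [Unitary.conjStarAlgAut_star_apply] at diagonalization
    calc star (U : Matrix m m ℂ) * Ψ * (star (U : Matrix m m ℂ) * Ψ)ᴴ
        = star (U : Matrix m m ℂ) * (Ψ * Ψᴴ) * (U : Matrix m m ℂ) := by
          rw [conjTranspose_mul, star_eq_conjTranspose, conjTranspose_conjTranspose]
          simp only [Matrix.mul_assoc]
      _ = diagonal (RCLike.ofReal ∘ hG.isHermitian.eigenvalues) := diagonalization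
      _ = diagonal fun i => (√(hG.isHermitian.eigenvalues i) : ℂ) ^ 2 := by
          congr! 2 with i
          rw [Function.comp_apply, ← Complex.ofReal_pow, Real.sq_sqrt (hG.eigenvalues_nonneg i)]
          rfl

theorem exists_svd [Fintype m] [Fintype n] [DecidableEq m] [DecidableEq n] (Ψ : Matrix m n ℂ) :
    ∃ U ∈ unitaryGroup m ℂ, ∃ (s : m → ℝ) (V : Matrix m n ℂ),
      Ψ = U * diagonal (fun i => (s i : ℂ)) * V ∧ (1 - Vᴴ * V).PosSemidef ∧
      ∀ i, (s i : ℂ) * (V.row i ⬝ᵥ star (V.row i)) = s i := by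
  obtain ⟨U, hU, s, Φ, hΨ, hΦ⟩ := exists_unitary_mul_orthogonal_rows Ψ
  have row_eq_zero {i : m} (hi : s i = 0) : Φ i = 0 := by
    rw [← dotProduct_self_star_eq_zero]
    simpa [hi, Matrix.mul_apply, dotProduct] using congr_fun₂ hΦ i i
  set V := (diagonal fun i => (s i : ℂ)⁻¹) * Φ with hV
  have hVV : V * Vᴴ = diagonal fun i => (s i : ℂ)⁻¹ * s i := by
    rw [conjTranspose_mul, Matrix.mul_assoc, ← Matrix.mul_assoc Φ, hΦ, diagonal_conjTranspose,
      diagonal_mul_diagonal, diagonal_mul_diagonal]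
    congr 1
    ext i
    simp only [Pi.star_apply, star_inv₀, RCLike.star_def, Complex.conj_ofReal]
    rcases eq_or_ne (s i) 0 with hi | hi
    · simp [hi]
    · field_simp
  refine ⟨U, hU, s, V, ?_, posSemidef_one_sub_conjTranspose_mul_self ?_, fun i => ?_⟩
  · suffices Φ = diagonal (fun i => (s i : ℂ)) * V by rw [hΨ, this, Matrix.mul_assoc]
    ext i x
    rw [diagonal_mul, hV, diagonal_mul]
    rcases eq_or_ne (s i) 0 with hi | hi
    · simp [row_eq_zero hi]
    · field_simp
  · rw [hVV, hV, ← Matrix.mul_assoc, diagonal_mul_diagonal]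
    congr! 3 with i
    simpa only [inv_inv] using mul_inv_mul_cancel (s i : ℂ)⁻¹
  · have norm_row : V.row i ⬝ᵥ star (V.row i) = (s i : ℂ)⁻¹ * s i := by
      rw [← diagonal_apply_eq (fun i => (s i : ℂ)⁻¹ * s i), ← hVV]
      rfl
    rw [norm_row, ← mul_assoc, mul_inv_mul_cancel]

section ReductionMap

variable {K : Type*} [CommRing K] [Fintype m]

/-- The partial trace over the first factor of a bipartite system. -/
def traceLeft : Matrix (m × n) (m × n) K →ₗ[K] Matrix n n K where
  toFun τ := of fun x y => ∑ k, τ (k, x) (k, y)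
  map_add' _ _ := by ext; simp [Finset.sum_add_distrib]
  map_smul' _ _ := by ext; simp [Finset.mul_sum]

theorem traceLeft_kronecker (A : Matrix m m K) (B : Matrix n n K) :
    traceLeft (A ⊗ₖ B) = A.trace • B := by
  ext x y
  simp [traceLeft, Matrix.trace, Finset.sum_mul]

theorem trace_traceLeft [Fintype n] (τ : Matrix (m × n) (m × n) K) :
    (traceLeft τ).trace = τ.trace :=
  (Fintype.sum_prod_type_right fun p => τ p p).symm

/-- The reduction map `τ ↦ 𝟙 ⊗ Tr_A τ - τ` on the first factor `A` of a bipartite system. -/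
def reductionMap [DecidableEq m] : Matrix (m × n) (m × n) K →ₗ[K] Matrix (m × n) (m × n) K where
  toFun τ := 1 ⊗ₖ traceLeft τ - τ
  map_add' _ _ := by simp only [map_add, kronecker_add]; abel
  map_smul' _ _ := by simp only [map_smul, kronecker_smul, smul_sub, RingHom.id_apply]

theorem reductionMap_apply [DecidableEq m] (τ : Matrix (m × n) (m × n) K) :
    reductionMap τ = 1 ⊗ₖ traceLeft τ - τ :=
  rfl

theorem reductionMap_kronecker [DecidableEq m] (A : Matrix m m K) (B : Matrix n n K) :
    reductionMap (A ⊗ₖ B) = A.trace • (1 ⊗ₖ B) - A ⊗ₖ B := by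
  rw [reductionMap_apply, traceLeft_kronecker, kronecker_smul]

theorem traceLeft_reductionMap (τ : Matrix (Fin 2 × n) (Fin 2 × n) K) :
    traceLeft (reductionMap τ) = traceLeft τ := by
  rw [reductionMap_apply, map_sub, traceLeft_kronecker, trace_one, Fintype.card_fin]
  module

theorem reductionMap_reductionMap (τ : Matrix (Fin 2 × n) (Fin 2 × n) K) :
    reductionMap (reductionMap τ) = τ := by
  rw [reductionMap_apply, traceLeft_reductionMap, reductionMap_apply, sub_sub_cancel]

theorem trace_reductionMap [Fintype n] (τ : Matrix (Fin 2 × n) (Fin 2 × n) K) :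
    (reductionMap τ).trace = τ.trace := by
  rw [← trace_traceLeft, traceLeft_reductionMap, trace_traceLeft]

theorem reductionMap_one [DecidableEq n] :
    reductionMap (1 : Matrix (Fin 2 × n) (Fin 2 × n) K) = 1 := by
  rw [← one_kronecker_one, reductionMap_kronecker, trace_one, Fintype.card_fin]
  module

/-- The Breuer-Hall-inspired map `τ ↦ Tr τ • 𝟙 + α τ + β R τ`, with `R` the reduction map on the
first factor in the role of `τ ↦ τ̃_A`. -/
def breuerHall [DecidableEq m] [Fintype n] [DecidableEq n] (α β : K) :
    Matrix (m × n) (m × n) K →ₗ[K] Matrix (m × n) (m × n) K :=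
  (traceLinearMap (m × n) K K).smulRight 1 + α • LinearMap.id + β • reductionMap

theorem breuerHall_apply [DecidableEq m] [Fintype n] [DecidableEq n] (α β : K)
    (τ : Matrix (m × n) (m × n) K) :
    breuerHall α β τ = τ.trace • 1 + α • τ + β • reductionMap τ :=
  rfl

end ReductionMap

section BreuerHallInv

variable {K : Type*} [Field K] [Fintype n] [DecidableEq n]

/-- The inverse of `breuerHall α β` for a qubit in the first factor, meaningful when `α² ≠ β²` and
`Fintype.card (Fin 2 × n) + α + β ≠ 0`. -/
def breuerHallInv (α β : K) (σ : Matrix (Fin 2 × n) (Fin 2 × n) K) :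
    Matrix (Fin 2 × n) (Fin 2 × n) K :=
  (α ^ 2 - β ^ 2)⁻¹ • (α • σ - β • reductionMap σ -
    ((α - β) / (Fintype.card (Fin 2 × n) + α + β)) • σ.trace • 1)

theorem breuerHall_breuerHallInv {α β : K} (hαβ : α ^ 2 ≠ β ^ 2)
    (hcard : (Fintype.card (Fin 2 × n) : K) + α + β ≠ 0)
    (σ : Matrix (Fin 2 × n) (Fin 2 × n) K) : breuerHall α β (breuerHallInv α β σ) = σ := by
  have hsub : α ^ 2 - β ^ 2 ≠ 0 := sub_ne_zero.2 hαβ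
  rw [breuerHall_apply, breuerHallInv]
  simp only [map_sub, map_smul, reductionMap_reductionMap, reductionMap_one, trace_sub, trace_smul,
    trace_reductionMap, trace_one, smul_eq_mul]
  match_scalars <;> field_simp <;> ring

end BreuerHallInv

theorem sq_mul_mul_le_of_sq_le {α γ p q : ℝ} (hα : -1 ≤ α) (hγ : γ ^ 2 ≤ (α + 2) ^ 2)
    (hp : 0 ≤ p) (hq : 0 ≤ q) :
    γ ^ 2 * (p * q) ≤ (p + q + α * p) * (p + q + α * q) := by
  calc γ ^ 2 * (p * q) ≤ (α + 2) ^ 2 * (p * q) := by gcongr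
    _ ≤ (α + 2) ^ 2 * (p * q) + (1 + α) * (p - q) ^ 2 :=
      le_add_of_nonneg_right (mul_nonneg (by linarith) (sq_nonneg _))
    _ = (p + q + α * p) * (p + q + α * q) := by ring

theorem sum_ketBra_col [Fintype m] [DecidableEq m] {U : Matrix m m ℂ}
    (hU : U ∈ unitaryGroup m ℂ) : ∑ i, ketBra (U.col i) (U.col i) = 1 := by
  rw [← Unitary.mul_star_self_of_mem hU]
  ext x y
  simp [Matrix.sum_apply, Matrix.mul_apply, vecMulVec_apply]

theorem sum_ketBra_row [Fintype m] (V : Matrix m n ℂ) :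
    ∑ i, ketBra (V.row i) (V.row i) = (Vᴴ * V)ᵀ := by
  ext x y
  simp [Matrix.sum_apply, Matrix.mul_apply, vecMulVec_apply, mul_comm]

theorem trace_ketBra_col [Fintype m] [DecidableEq m] {U : Matrix m m ℂ} (hU : U ∈ unitaryGroup m ℂ)
    (i j : m) : (ketBra (U.col i) (U.col j)).trace = (1 : Matrix m m ℂ) i j := by
  rw [← transpose_one, transpose_apply, ← Unitary.star_mul_self_of_mem hU]
  simp [Matrix.trace, Matrix.mul_apply, vecMulVec_apply, mul_comm]

section Schmidt

variable {U : Matrix (Fin 2) (Fin 2) ℂ}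

theorem one_kronecker_eq_ketBra_col (hU : U ∈ unitaryGroup (Fin 2) ℂ) (B : Matrix n n ℂ) :
    1 ⊗ₖ B = ketBra (U.col 0) (U.col 0) ⊗ₖ B + ketBra (U.col 1) (U.col 1) ⊗ₖ B := by
  rw [← sum_ketBra_col hU, Fin.sum_univ_two, add_kronecker]

theorem reductionMap_xForm (hU : U ∈ unitaryGroup (Fin 2) ℂ) (u v : n → ℂ) (a b c d γ : ℝ) :
    reductionMap (xForm (U.col 0) (U.col 1) u v a b c d γ) =
      xForm (U.col 0) (U.col 1) u v c d a b (-γ) := by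
  simp only [xForm, ← Complex.coe_smul, map_add, map_smul, reductionMap_kronecker,
    trace_ketBra_col hU, one_apply_eq, one_apply_ne zero_ne_one, one_apply_ne one_ne_zero,
    one_kronecker_eq_ketBra_col hU, Complex.ofReal_neg]
  module

theorem one_eq_kronecker_add_xForm [DecidableEq n] (hU : U ∈ unitaryGroup (Fin 2) ℂ)
    (u v : n → ℂ) :
    1 = 1 ⊗ₖ (1 - ketBra u u - ketBra v v) + xForm (U.col 0) (U.col 1) u v 1 1 1 1 0 := by
  simp only [xForm, one_smul, zero_smul, add_zero]
  rw [← one_kronecker_eq_ketBra_col hU, ← kronecker_add, ← one_kronecker_one]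
  congr 1
  abel

theorem breuerHall_xForm [Fintype n] [DecidableEq n] (hU : U ∈ unitaryGroup (Fin 2) ℂ)
    {u v : n → ℂ} {s t : ℝ} (hu : (s : ℂ) * (u ⬝ᵥ star u) = s) (hv : (t : ℂ) * (v ⬝ᵥ star v) = t)
    (α β : ℝ) :
    breuerHall (α : ℂ) β (xForm (U.col 0) (U.col 1) u v (s ^ 2) 0 0 (t ^ 2) (s * t)) =
      (s ^ 2 + t ^ 2) • (1 ⊗ₖ (1 - ketBra u u - ketBra v v)) +
        xForm (U.col 0) (U.col 1) u v (s ^ 2 + t ^ 2 + α * s ^ 2) (s ^ 2 + t ^ 2 + β * t ^ 2)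
          (s ^ 2 + t ^ 2 + β * s ^ 2) (s ^ 2 + t ^ 2 + α * t ^ 2) ((α - β) * (s * t)) := by
  have htrace : (xForm (U.col 0) (U.col 1) u v (s ^ 2) 0 0 (t ^ 2) (s * t)).trace =
      ((s ^ 2 + t ^ 2 : ℝ) : ℂ) := by
    simp only [xForm, trace_add, trace_smul, trace_kronecker, trace_ketBra_col hU, one_apply_eq,
      one_apply_ne zero_ne_one, one_apply_ne one_ne_zero, zero_smul, trace_zero, trace_vecMulVec,
      Complex.real_smul, Complex.ofReal_add, Complex.ofReal_pow]
    linear_combination (s : ℂ) * hu + (t : ℂ) * hv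
  rw [breuerHall_apply, htrace, reductionMap_xForm hU, one_eq_kronecker_add_xForm hU u v]
  simp only [xForm, Complex.coe_smul, kronecker_add, kronecker_smul]
  module

theorem exists_ketBra_eq_xForm [Fintype n] [DecidableEq n] (ψ : Fin 2 × n → ℂ) :
    ∃ U ∈ unitaryGroup (Fin 2) ℂ, ∃ (u v : n → ℂ) (s t : ℝ),
      ketBra ψ ψ = xForm (U.col 0) (U.col 1) u v (s ^ 2) 0 0 (t ^ 2) (s * t) ∧
      (1 - ketBra u u - ketBra v v).PosSemidef ∧
      (s : ℂ) * (u ⬝ᵥ star u) = s ∧ (t : ℂ) * (v ⬝ᵥ star v) = t := by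
  obtain ⟨U, hU, s, V, hψ, hV, norm_row⟩ := exists_svd (of (Function.curry ψ))
  refine ⟨U, hU, V.row 0, V.row 1, s 0, s 1, ?_, ?_, norm_row 0, norm_row 1⟩
  · have hψ' (k : Fin 2) (x : n) : ψ (k, x) = U k 0 * s 0 * V 0 x + U k 1 * s 1 * V 1 x := by
      simpa [Matrix.mul_apply, Fin.sum_univ_two] using congr_fun₂ hψ k x
    ext ⟨k, x⟩ ⟨l, y⟩
    simp only [xForm, hψ', vecMulVec_apply, kroneckerMap_apply, Matrix.add_apply, Matrix.smul_apply,
      col_apply, row_apply, Pi.star_apply, star_add, star_mul', RCLike.star_def,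
      Complex.conj_ofReal, Complex.real_smul, Complex.ofReal_pow, Complex.ofReal_mul, zero_smul,
      add_zero, zero_add, smul_add]
    ring
  · rw [sub_sub, ← Fin.sum_univ_two fun i => ketBra (V.row i) (V.row i), sum_ketBra_row]
    simpa only [transpose_sub, transpose_one] using hV.transpose

end Schmidt

theorem breuerHall_ketBra_mem_sepCone [Fintype n] [DecidableEq n] {α β : ℝ} (hα : -1 ≤ α)
    (hβ : -1 ≤ β) (hβα : β / 2 - 1 ≤ α) (hαβ : α / 2 - 1 ≤ β) (ψ : Fin 2 × n → ℂ) :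
    breuerHall (α : ℂ) β (ketBra ψ ψ) ∈ sepCone (Fin 2) n := by
  obtain ⟨U, hU, u, v, s, t, hψ, huv, hu, hv⟩ := exists_ketBra_eq_xForm ψ
  have hsα : (α - β) ^ 2 ≤ (α + 2) ^ 2 := sq_le_sq' (by linarith) (by linarith)
  have hsβ : (α - β) ^ 2 ≤ (β + 2) ^ 2 := sq_le_sq' (by linarith) (by linarith)
  have hs := sq_nonneg s
  have ht := sq_nonneg t
  rw [hψ, breuerHall_xForm hU hu hv]
  refine add_mem (smul_mem_sepCone (add_nonneg hs ht) (kronecker_mem_sepCone .one huv))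
    (xForm_mem_sepCone _ _ _ _ (by nlinarith) (by nlinarith) (by nlinarith) (by nlinarith) ?_ ?_)
  · rw [mul_pow, mul_pow]
    exact sq_mul_mul_le_of_sq_le hα hsα hs ht
  · rw [mul_pow, mul_pow, mul_comm (_ + _)]
    exact sq_mul_mul_le_of_sq_le hβ hsβ hs ht

theorem breuerHall_mem_sepCone [Fintype n] [DecidableEq n] {α β : ℝ} (hα : -1 ≤ α)
    (hβ : -1 ≤ β) (hβα : β / 2 - 1 ≤ α) (hαβ : α / 2 - 1 ≤ β)
    {τ : Matrix (Fin 2 × n) (Fin 2 × n) ℂ} (hτ : τ.PosSemidef) :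
    breuerHall (α : ℂ) β τ ∈ sepCone (Fin 2) n := by
  obtain ⟨k, ψ, rfl⟩ := posSemidef_iff_eq_sum_vecMulVec.1 hτ
  rw [map_sum]
  exact sum_mem fun i _ => breuerHall_ketBra_mem_sepCone hα hβ hβα hαβ (ψ i)

theorem mem_sepCone_of_posSemidef_breuerHallInv [Fintype n] [DecidableEq n] {α β : ℝ}
    (hα : -1 ≤ α) (hβ : -1 ≤ β) (hβα : β / 2 - 1 ≤ α) (hαβ : α / 2 - 1 ≤ β)
    (hsq : α ^ 2 ≠ β ^ 2) (hcard : (Fintype.card (Fin 2 × n) : ℝ) + α + β ≠ 0)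
    {σ : Matrix (Fin 2 × n) (Fin 2 × n) ℂ} (hσ : (breuerHallInv (α : ℂ) β σ).PosSemidef) :
    σ ∈ sepCone (Fin 2) n := by
  rw [← breuerHall_breuerHallInv (α := (α : ℂ)) (β := β) (mod_cast hsq) (mod_cast hcard) σ]
  exact breuerHall_mem_sepCone hα hβ hβα hαβ hσ

/-- Partial transposition of the first factor of a bipartite system. -/
def transposeLeft {K : Type*} (τ : Matrix (m × n) (m × n) K) : Matrix (m × n) (m × n) K :=
  of fun p q => τ (q.1, p.2) (p.1, q.2)

theorem pauliY_mul_transpose_mul_pauliY (M : Matrix (Fin 2) (Fin 2) ℂ) :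
    pauliY * Mᵀ * pauliY = M.trace • 1 - M := by
  rw [eta_fin_two Mᵀ, pauliY, mul_fin_two, mul_fin_two, trace_fin_two]
  ext k l
  fin_cases k <;> fin_cases l <;> simp [mul_right_comm Complex.I]

theorem pauliY_mul_transposeLeft_mul_pauliY [Fintype n] [DecidableEq n]
    (τ : Matrix (Fin 2 × n) (Fin 2 × n) ℂ) :
    (pauliY ⊗ₖ 1) * transposeLeft τ * (pauliY ⊗ₖ 1) = reductionMap τ := by
  ext ⟨k, x⟩ ⟨l, y⟩
  have block := congr_fun₂ (pauliY_mul_transpose_mul_pauliY (of fun i j => τ (i, x) (j, y))) k l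
  simpa [Matrix.mul_apply, Matrix.trace, Fintype.sum_prod_type, one_apply, transposeLeft,
    reductionMap_apply, traceLeft] using block

section SplitQubit

variable {N : ℕ} (z : Fin N)

/-- Regards an `N`-qubit operator as an operator on the bipartite system consisting of the qubit `z`
and the remaining qubits. -/
def splitQubit : Matrix (Fin N → Fin 2) (Fin N → Fin 2) ℂ ≃ₐ[ℂ]
    Matrix (Fin 2 × ({j // j ≠ z} → Fin 2)) (Fin 2 × ({j // j ≠ z} → Fin 2)) ℂ :=
  reindexAlgEquiv ℂ ℂ (Equiv.funSplitAt z (Fin 2))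

theorem splitQubit_apply (σ : Matrix (Fin N → Fin 2) (Fin N → Fin 2) ℂ) (x y : Fin N → Fin 2) :
    splitQubit z σ (x z, fun j => x j) (y z, fun j => y j) = σ x y :=
  congr_arg₂ σ ((Equiv.funSplitAt z (Fin 2)).symm_apply_apply x)
    ((Equiv.funSplitAt z (Fin 2)).symm_apply_apply y)

theorem trace_splitQubit (σ : Matrix (Fin N → Fin 2) (Fin N → Fin 2) ℂ) :
    (splitQubit z σ).trace = σ.trace :=
  (Equiv.funSplitAt z (Fin 2)).symm.sum_comp fun x => σ x x

theorem posSemidef_splitQubit {σ : Matrix (Fin N → Fin 2) (Fin N → Fin 2) ℂ} (hσ : σ.PosSemidef) :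
    (splitQubit z σ).PosSemidef :=
  hσ.submatrix _

theorem pauliYat_singleton_apply (x y : Fin N → Fin 2) :
    pauliYat {z} x y = (pauliY ⊗ₖ (1 : Matrix ({j // j ≠ z} → Fin 2) ({j // j ≠ z} → Fin 2) ℂ))
      (x z, fun j => x j) (y z, fun j => y j) := by
  have prod_ne : ∏ j : {j // j ≠ z}, (if x j = y j then (1 : ℂ) else 0) =
      (1 : Matrix ({j // j ≠ z} → Fin 2) ({j // j ≠ z} → Fin 2) ℂ)
        (fun j => x j) (fun j => y j) := by
    simp only [Finset.prod_ite_zero, Finset.prod_const_one, Finset.mem_univ, true_imp_iff,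
      one_apply, funext_iff]
  rw [kroneckerMap_apply, ← prod_ne, pauliYat, Fintype.prod_eq_mul_prod_subtype_ne _ z,
    if_pos (Finset.mem_singleton_self z)]
  congr! 2 with j
  exact if_neg fun hj => j.2 (Finset.mem_singleton.1 hj)

theorem splitQubit_pauliYat : splitQubit z (pauliYat {z}) = pauliY ⊗ₖ 1 := by
  ext p q
  obtain ⟨x, rfl⟩ := (Equiv.funSplitAt z (Fin 2)).surjective p
  obtain ⟨y, rfl⟩ := (Equiv.funSplitAt z (Fin 2)).surjective q
  exact (splitQubit_apply z _ x y).trans (pauliYat_singleton_apply z x y)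

theorem splitQubit_pt (σ : Matrix (Fin N → Fin 2) (Fin N → Fin 2) ℂ) :
    splitQubit z (pt {z} σ) = transposeLeft (splitQubit z σ) := by
  ext ⟨k, x⟩ ⟨l, y⟩
  simp only [splitQubit, coe_reindexAlgEquiv, reindex_apply, submatrix_apply, pt, transposeLeft,
    of_apply]
  congr 1
  all_goals
    ext j
    by_cases h : j = z
    · subst h
      simp
    · simp [h]

theorem splitQubit_tildeAt (σ : Matrix (Fin N → Fin 2) (Fin N → Fin 2) ℂ) :
    splitQubit z (tildeAt {z} σ) = reductionMap (splitQubit z σ) := by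
  rw [tildeAt, map_mul, map_mul, splitQubit_pauliYat, splitQubit_pt,
    pauliY_mul_transposeLeft_mul_pauliY]

theorem sepAcross_singleton {σ : Matrix (Fin N → Fin 2) (Fin N → Fin 2) ℂ}
    (hσ : splitQubit z σ ∈ sepCone (Fin 2) ({j // j ≠ z} → Fin 2)) : SepAcross {z} σ := by
  obtain ⟨K, A, B, hA, hB, hAB⟩ := exists_eq_sum_kronecker_of_mem_sepCone hσ
  refine ⟨K, fun k => (A k).submatrix (fun f => f ⟨z, by simp⟩) (fun f => f ⟨z, by simp⟩),
    fun k => (B k).submatrix (fun f j => f ⟨j, by simpa using j.2⟩)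
      (fun f j => f ⟨j, by simpa using j.2⟩),
    fun k => (hA k).submatrix _, fun k => (hB k).submatrix _, fun x y => ?_⟩
  rw [← splitQubit_apply z σ, hAB, Matrix.sum_apply]
  rfl

end SplitQubit

end Bipartite

theorem two_pow_add_add_pos {N : ℕ} (hN : N ≠ 0) {α β : ℝ} (hα : -1 ≤ α) (hβ : -1 ≤ β)
    (hαβ : α ≠ β) : 0 < 2 ^ N + α + β := by
  have hpow : (2 : ℝ) ≤ 2 ^ N := le_self_pow₀ one_le_two hN
  rcases hαβ.lt_or_gt with h | h <;> linarith

theorem stmt12_general {N : ℕ} (z : Fin N) {α β : ℝ} (hα : max (-1) (β / 2 - 1) ≤ α)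
    (hβ : max (-1) (α / 2 - 1) ≤ β) (hαβ : α ^ 2 ≠ β ^ 2)
    {σ : Matrix (Fin N → Fin 2) (Fin N → Fin 2) ℂ}
    (h : ((((α ^ 2 - β ^ 2)⁻¹ : ℝ) : ℂ) •
        ((α : ℂ) • σ - (β : ℂ) • tildeAt {z} σ -
          (((α - β) / (2 ^ N + α + β) : ℝ) : ℂ) • σ.trace •
            (1 : Matrix (Fin N → Fin 2) (Fin N → Fin 2) ℂ))).PosSemidef) :
    SepAcross {z} σ := by
  obtain ⟨hα₁, hβα⟩ := max_le_iff.1 hα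
  obtain ⟨hβ₁, hαβ₁⟩ := max_le_iff.1 hβ
  have card_eq : Fintype.card (Fin 2 × ({j // j ≠ z} → Fin 2)) = 2 ^ N := by
    simp [← Fintype.card_congr (Equiv.funSplitAt z (Fin 2))]
  refine sepAcross_singleton z
    (mem_sepCone_of_posSemidef_breuerHallInv hα₁ hβ₁ hβα hαβ₁ hαβ ?_ ?_)
  · have hpos := two_pow_add_add_pos z.pos.ne' hα₁ hβ₁ (ne_of_apply_ne (· ^ 2) hαβ)
    rw [card_eq]
    exact_mod_cast hpos.ne'
  · convert posSemidef_splitQubit z h using 1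
    simp only [breuerHallInv, map_smul, map_sub, map_one, splitQubit_tildeAt, trace_splitQubit,
      card_eq]
    push_cast
    rfl

/-- Sufficient `(N-1)`-depth criterion from the inverse of the Breuer-Hall-inspired map. -/
theorem stmt12 (N : ℕ) (hN : 2 ≤ N)
    (α β : ℝ) (hα : max (-1) (β / 2 - 1) ≤ α) (hβ : max (-1) (α / 2 - 1) ≤ β)
    (hαβ : α ^ 2 ≠ β ^ 2)
    (σ : Matrix (Fin N → Fin 2) (Fin N → Fin 2) ℂ)
    (h : ((((α ^ 2 - β ^ 2)⁻¹ : ℝ) : ℂ) •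
        ((α : ℂ) • σ - (β : ℂ) • tildeAt {⟨0, by omega⟩} σ -
          (((α - β) / (2 ^ N + α + β) : ℝ) : ℂ) • σ.trace •
            (1 : Matrix (Fin N → Fin 2) (Fin N → Fin 2) ℂ))).PosSemidef) :
    SepAcross {⟨0, by omega⟩} σ :=
  stmt12_general ⟨0, by omega⟩ hα hβ hαβ h
end
end
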